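/- Let α ∈ 𝕀 be an irrational power series and (Q_k)_{k≥1} the denominators of its continued fraction convergents. Then there exists ε > 0 such that Bad^ε(α) has Hausdorff dimension 1 if and only if lim_{k→∞} ‖Q_k‖^{1/k} = ∞. -/

import Mathlib

/-!
Common setup: the field `𝔽_q((z⁻¹))` of formal power series over a finite field `K` of
cardinality `q`, modeled as the field `FF K` of formal Laurent series in `t = z⁻¹`,
together with its non-Archimedean norm, the embedding of the polynomial ring `𝔽_q[z]`,
distances to polynomial (vectors), Diophantine exponents, `Bad` sets, continued fractions
and best approximation sequences.
-/

open scoped Classical ENNReal NNReal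
open Filter

noncomputable section

namespace FPSDA

variable (K : Type*) [Field K] [Fintype K]

/-- The field `𝔽_q((z⁻¹))` of formal power series in `z⁻¹` over the finite field `K = 𝔽_q`,
modeled as the field of formal Laurent series in the variable `t = z⁻¹`. -/
def FF : Type _ := LaurentSeries K

instance : Field (FF K) := inferInstanceAs (Field (LaurentSeries K))

variable {K}

/-- The identity map, viewing an element of `𝔽_q((z⁻¹))` as a Laurent series in `t = z⁻¹`. -/
def toL (x : FF K) : LaurentSeries K := x

@[simp] lemma toL_zero : toL (0 : FF K) = 0 := rfl
@[simp] lemma toL_add (x y : FF K) : toL (x + y) = toL x + toL y := rfl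
@[simp] lemma toL_neg (x : FF K) : toL (-x) = -toL x := rfl
@[simp] lemma toL_sub (x y : FF K) : toL (x - y) = toL x - toL y := rfl
lemma toL_eq_zero {x : FF K} : toL x = 0 ↔ x = 0 := Iff.rfl

/-- The norm `‖x‖ = q ^ (deg x)` on `𝔽_q((z⁻¹))`, where
`deg x = - (order of x as a Laurent series in z⁻¹)`; `‖0‖ = 0`. -/
def fnorm (x : FF K) : ℝ :=
  if toL x = 0 then 0 else (Fintype.card K : ℝ) ^ (-(toL x).order)

lemma one_le_q : (1 : ℝ) ≤ (Fintype.card K : ℝ) := by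
  exact_mod_cast Fintype.card_pos

lemma fnorm_nonneg (x : FF K) : 0 ≤ fnorm x := by
  unfold fnorm
  split_ifs
  · exact le_refl 0
  · exact zpow_nonneg (by positivity) _

lemma fnorm_eq_zero {x : FF K} : fnorm x = 0 ↔ x = 0 := by
  unfold fnorm
  split_ifs with h
  · exact ⟨fun _ => toL_eq_zero.mp h, fun _ => rfl⟩
  · constructor
    · intro hc
      exact absurd hc (zpow_ne_zero _ (by
        have h0 : (0:ℝ) < (Fintype.card K : ℝ) := by positivity
        exact ne_of_gt h0))
    · intro hc
      exact absurd (toL_eq_zero.mpr hc) h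

lemma fnorm_neg (x : FF K) : fnorm (-x) = fnorm x := by
  unfold fnorm
  rw [toL_neg]
  simp [neg_eq_zero, HahnSeries.order_neg]

lemma fnorm_add_le (x y : FF K) : fnorm (x + y) ≤ max (fnorm x) (fnorm y) := by
  by_cases hxy : x + y = 0
  · rw [fnorm_eq_zero.mpr hxy]
    exact le_max_of_le_left (fnorm_nonneg x)
  by_cases hx : x = 0
  · rw [hx, zero_add]
    exact le_max_right _ _
  by_cases hy : y = 0
  · rw [hy, add_zero]
    exact le_max_left _ _
  have horder : min (toL x).order (toL y).order ≤ (toL (x + y)).order := by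
    rw [toL_add]
    exact HahnSeries.min_order_le_order_add (show toL x + toL y ≠ 0 from hxy)
  have h1 : fnorm (x + y) = (Fintype.card K : ℝ) ^ (-(toL (x+y)).order) := by
    unfold fnorm
    rw [if_neg (show toL (x + y) ≠ 0 from hxy)]
  rcases le_total (toL x).order (toL y).order with h | h
  · have h2 : (toL x).order ≤ (toL (x+y)).order := le_trans (by simp [min_eq_left h]) horder
    refine le_max_of_le_left ?_
    rw [h1]
    unfold fnorm
    rw [if_neg (show toL x ≠ 0 from hx)]
    exact zpow_le_zpow_right₀ one_le_q (by omega)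
  · have h2 : (toL y).order ≤ (toL (x+y)).order := le_trans (by simp [min_eq_right h]) horder
    refine le_max_of_le_right ?_
    rw [h1]
    unfold fnorm
    rw [if_neg (show toL y ≠ 0 from hy)]
    exact zpow_le_zpow_right₀ one_le_q (by omega)

/-- The (ultra)metric `dist x y = ‖x - y‖` on `𝔽_q((z⁻¹))`. -/
instance : MetricSpace (FF K) where
  dist x y := fnorm (x - y)
  dist_self x := by
    show fnorm (x - x) = 0
    rw [sub_self]
    exact fnorm_eq_zero.mpr rfl
  dist_comm x y := by
    show fnorm (x - y) = fnorm (y - x)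
    have h : x - y = -(y - x) := by ring
    rw [h, fnorm_neg]
  dist_triangle x y z := by
    show fnorm (x - z) ≤ fnorm (x - y) + fnorm (y - z)
    have h : x - z = (x - y) + (y - z) := by ring
    calc fnorm (x - z) ≤ max (fnorm (x - y)) (fnorm (y - z)) := by
          rw [h]; exact fnorm_add_le _ _
      _ ≤ fnorm (x - y) + fnorm (y - z) :=
        max_le (le_add_of_nonneg_right (fnorm_nonneg _)) (le_add_of_nonneg_left (fnorm_nonneg _))
  eq_of_dist_eq_zero := by
    intro x y h
    have h' : x - y = 0 := fnorm_eq_zero.mp h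
    exact sub_eq_zero.mp h'

instance : MeasurableSpace (FF K) := borel _
instance : BorelSpace (FF K) := ⟨rfl⟩

/-- The canonical embedding of the polynomial ring `𝔽_q[z]` into `𝔽_q((z⁻¹))`:
the variable `z` is sent to `t⁻¹ = single (-1) 1`. -/
def polyF (P : Polynomial K) : FF K :=
  Polynomial.aeval (HahnSeries.single (-1 : ℤ) (1 : K)) P

/-- Supremum norm of a vector with entries in `𝔽_q((z⁻¹))`. -/
def vnorm {ι : Type*} [Fintype ι] (v : ι → FF K) : ℝ := ⨆ i, fnorm (v i)

/-- `⟨v⟩`, the distance from the vector `v` to the nearest polynomial vector. -/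
def vdist {ι : Type*} [Fintype ι] (v : ι → FF K) : ℝ :=
  ⨅ y : ι → Polynomial K, vnorm (fun i => v i - polyF (y i))

/-- `⟨x⟩`, the distance from the scalar `x` to the nearest polynomial. -/
def sdist (x : FF K) : ℝ := ⨅ y : Polynomial K, fnorm (x - polyF y)

/-- The fractional part `{x} = Σ_{i ≥ 1} a_i z^{-i}` of `x = Σ_i a_i z^{-i}`. -/
def fracPart (x : FF K) : FF K :=
  (⟨fun i => if 1 ≤ i then (toL x).coeff i else 0, (toL x).isPWO_support'.mono (by
      intro i hi
      by_cases h : (1:ℤ) ≤ i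
      · simpa [Function.mem_support, h] using hi
      · simp [Function.mem_support, h] at hi)⟩ : LaurentSeries K)

/-- The integer part `[x] = Σ_{i ≤ 0} a_i z^{-i}` of `x = Σ_i a_i z^{-i}`, as a polynomial
in `z`. -/
def intPoly (x : FF K) : Polynomial K :=
  ∑ i ∈ Finset.range ((-(toL x).order).toNat + 1),
    Polynomial.monomial i ((toL x).coeff (-(i : ℤ)))

/-- `x ∈ 𝔽_q((z⁻¹))` is irrational if it is not in `𝔽_q(z)`, i.e. is not a ratio of two
polynomials in `z`. -/
def FIrrational (x : FF K) : Prop :=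
  ∀ P Q : Polynomial K, Q ≠ 0 → x * polyF Q ≠ polyF P

section Exponents

variable {m n : ℕ}

/-- The norm `‖x‖ = max_j ‖x_j‖` of a polynomial vector `x`. -/
def pnorm {ι : Type*} [Fintype ι] (x : ι → Polynomial K) : ℝ :=
  vnorm (fun i => (polyF (x i) : FF K))

/-- The system `⟨A x - θ⟩ ≤ H^{-ω}`, `‖x‖ ≤ H` has a polynomial solution `x`. -/
def Solv (A : Matrix (Fin n) (Fin m) (FF K)) (θ : Fin n → FF K) (ω H : ℝ) : Prop :=
  ∃ x : Fin m → Polynomial K,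
    vdist (A.mulVec (fun j => polyF (x j)) - θ) ≤ H ^ (-ω) ∧ pnorm x ≤ H

/-- The system `⟨A x⟩ ≤ H^{-ω}`, `‖x‖ ≤ H` has a nonzero polynomial solution `x`. -/
def SolvHom (A : Matrix (Fin n) (Fin m) (FF K)) (ω H : ℝ) : Prop :=
  ∃ x : Fin m → Polynomial K, x ≠ 0 ∧
    vdist (A.mulVec (fun j => polyF (x j))) ≤ H ^ (-ω) ∧ pnorm x ≤ H

/-- The inhomogeneous exponent `ω(A, θ)`: the supremum (in `[0,∞]`) of all `ω` such that
for arbitrarily large `H` the system `⟨A x - θ⟩ ≤ H^{-ω}`, `‖x‖ ≤ H` has a polynomial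
solution. -/
def omegaInhom (A : Matrix (Fin n) (Fin m) (FF K)) (θ : Fin n → FF K) : ℝ≥0∞ :=
  ⨆ (ω : ℝ) (_ : ∀ H₀ : ℝ, ∃ H : ℝ, H₀ ≤ H ∧ Solv A θ ω H), ENNReal.ofReal ω

/-- The uniform inhomogeneous exponent `ω̂(A, θ)`: as `ω(A, θ)`, but with a solution for
all sufficiently large `H`. -/
def omegaHatInhom (A : Matrix (Fin n) (Fin m) (FF K)) (θ : Fin n → FF K) : ℝ≥0∞ :=
  ⨆ (ω : ℝ) (_ : ∃ H₀ : ℝ, ∀ H : ℝ, H₀ ≤ H → Solv A θ ω H), ENNReal.ofReal ω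

/-- The homogeneous exponent `ω(A)`. -/
def omegaHom (A : Matrix (Fin n) (Fin m) (FF K)) : ℝ≥0∞ :=
  ⨆ (ω : ℝ) (_ : ∀ H₀ : ℝ, ∃ H : ℝ, H₀ ≤ H ∧ SolvHom A ω H), ENNReal.ofReal ω

/-- The uniform homogeneous exponent `ω̂(A)`. -/
def omegaHatHom (A : Matrix (Fin n) (Fin m) (FF K)) : ℝ≥0∞ :=
  ⨆ (ω : ℝ) (_ : ∃ H₀ : ℝ, ∀ H : ℝ, H₀ ≤ H → SolvHom A ω H), ENNReal.ofReal ω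

/-- `A` is non-degenerate: the `𝔽_q[z]`-module `Aᵀ 𝔽_q[z]ⁿ + 𝔽_q[z]^m ⊆ 𝔽_q((z⁻¹))^m` has
rank `m + n` over `𝔽_q[z]`, i.e. its `m + n` natural generators are linearly independent
over `𝔽_q[z]`; equivalently, no nonzero polynomial vector `u` makes `Aᵀ u` a polynomial
vector. -/
def Nondegenerate (A : Matrix (Fin n) (Fin m) (FF K)) : Prop :=
  ∀ u : Fin n → Polynomial K,
    (∃ v : Fin m → Polynomial K,
      A.transpose.mulVec (fun i => polyF (u i)) = fun j => polyF (v j)) → u = 0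

/-- `liminf_{x ∈ 𝔽_q[z]^m, ‖x‖ → ∞} ‖x‖^{m/n} ⟨A x - θ⟩`, computed in `[0, ∞]`. -/
def badLiminf (A : Matrix (Fin n) (Fin m) (FF K)) (θ : Fin n → FF K) : ℝ≥0∞ :=
  Filter.liminf
    (fun x : Fin m → Polynomial K =>
      ENNReal.ofReal ((pnorm x) ^ ((m : ℝ) / (n : ℝ)) *
        vdist (A.mulVec (fun j => polyF (x j)) - θ)))
    (Filter.comap (fun x : Fin m → Polynomial K => pnorm x) Filter.atTop)

/-- The set `Bad^ε(A)` of `θ` in the unit polydisc `𝕀ⁿ` with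
`liminf_{‖x‖ → ∞} ‖x‖^{m/n} ⟨A x - θ⟩ ≥ ε`. -/
def Bad (A : Matrix (Fin n) (Fin m) (FF K)) (ε : ℝ) : Set (Fin n → FF K) :=
  {θ | (∀ i, fnorm (θ i) < 1) ∧ ENNReal.ofReal ε ≤ badLiminf A θ}

/-- The set `Bad(A) = ⋃_{ε > 0} Bad^ε(A)`. -/
def BadAll (A : Matrix (Fin n) (Fin m) (FF K)) : Set (Fin n → FF K) :=
  ⋃ (ε : ℝ) (_ : 0 < ε), Bad A ε

/-- `M(y) = ⟨Aᵀ y⟩` for a polynomial vector `y`. -/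
def Mfun (A : Matrix (Fin n) (Fin m) (FF K)) (y : Fin n → Polynomial K) : ℝ :=
  vdist (A.transpose.mulVec (fun i => polyF (y i)))

/-- `y 1, y 2, …` is a sequence of best approximations related to `Aᵀ`:
`1 = Y_1 < Y_2 < ⋯`, `M_1 > M_2 > ⋯`, and `M(x) ≥ M_k` for every nonzero polynomial
vector `x` with `‖x‖ < Y_{k+1}` (the value `y 0` is irrelevant). -/
def IsBestApproxSeq (A : Matrix (Fin n) (Fin m) (FF K))
    (y : ℕ → Fin n → Polynomial K) : Prop :=
  pnorm (y 1) = 1 ∧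
  (∀ k, 1 ≤ k → pnorm (y k) < pnorm (y (k + 1))) ∧
  (∀ k, 1 ≤ k → Mfun A (y (k + 1)) < Mfun A (y k)) ∧
  (∀ k, 1 ≤ k → ∀ x : Fin n → Polynomial K, x ≠ 0 → pnorm x < pnorm (y (k + 1)) →
    Mfun A (y k) ≤ Mfun A x)

end Exponents

section Scalar

/-- The system `⟨ξ x - θ⟩ ≤ H^{-ω}`, `‖x‖ ≤ H` has a polynomial solution `x`. -/
def sSolv (ξ θ : FF K) (ω H : ℝ) : Prop :=
  ∃ x : Polynomial K, sdist (ξ * polyF x - θ) ≤ H ^ (-ω) ∧ fnorm (polyF x) ≤ H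

/-- The scalar inhomogeneous exponent `ω((ξ), θ)`. -/
def somegaInhom (ξ θ : FF K) : ℝ≥0∞ :=
  ⨆ (ω : ℝ) (_ : ∀ H₀ : ℝ, ∃ H : ℝ, H₀ ≤ H ∧ sSolv ξ θ ω H), ENNReal.ofReal ω

/-- The scalar uniform inhomogeneous exponent `ω̂((ξ), θ)`. -/
def somegaHatInhom (ξ θ : FF K) : ℝ≥0∞ :=
  ⨆ (ω : ℝ) (_ : ∃ H₀ : ℝ, ∀ H : ℝ, H₀ ≤ H → sSolv ξ θ ω H), ENNReal.ofReal ω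

/-- The scalar homogeneous exponent `ω((ξ))`. -/
def somegaHom (ξ : FF K) : ℝ≥0∞ :=
  ⨆ (ω : ℝ) (_ : ∀ H₀ : ℝ, ∃ H : ℝ, H₀ ≤ H ∧ ∃ x : Polynomial K, x ≠ 0 ∧
      sdist (ξ * polyF x) ≤ H ^ (-ω) ∧ fnorm (polyF x) ≤ H), ENNReal.ofReal ω

/-- `liminf_{x ∈ 𝔽_q[z], ‖x‖ → ∞} ‖x‖ ⟨α x - θ⟩`, computed in `[0, ∞]`. -/
def sBadLiminf (α θ : FF K) : ℝ≥0∞ :=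
  Filter.liminf
    (fun x : Polynomial K => ENNReal.ofReal (fnorm (polyF x) * sdist (α * polyF x - θ)))
    (Filter.comap (fun x : Polynomial K => fnorm (polyF x)) Filter.atTop)

/-- The set `Bad^ε(α)` of `θ ∈ 𝕀` with `liminf_{‖x‖ → ∞} ‖x‖ ⟨α x - θ⟩ ≥ ε`. -/
def sBad (α : FF K) (ε : ℝ) : Set (FF K) :=
  {θ | fnorm θ < 1 ∧ ENNReal.ofReal ε ≤ sBadLiminf α θ}

end Scalar

section CF

/-- The Gauss map `T x = 1/x - [1/x]` on `𝔽_q((z⁻¹))`. -/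
def gaussMap (x : FF K) : FF K := fracPart x⁻¹

/-- `pquot α k` is the `(k+1)`-st partial quotient `A_{k+1} = [1 / T^k α]` of the
continued fraction expansion of `α`. -/
def pquot (α : FF K) (k : ℕ) : Polynomial K := intPoly ((gaussMap^[k] α)⁻¹)

/-- `cfQ α k` is the denominator `Q_k` of the `k`-th convergent of the continued fraction
expansion of `α`: `Q_0 = 1`, `Q_1 = A_1`, `Q_{k+2} = A_{k+2} Q_{k+1} + Q_k`. -/
def cfQ (α : FF K) : ℕ → Polynomial K
  | 0 => 1
  | 1 => pquot α 0
  | (k + 2) => pquot α (k + 1) * cfQ α (k + 1) + cfQ α k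

/-- `α` is singular on average: for every `c > 0` the proportion of `l ∈ {1, …, N}` for
which `‖{Q α}‖ ≤ c 2^{-l}` has a solution `Q ∈ 𝔽_q[z]` with `0 < ‖Q‖ ≤ 2^l` tends to `1`
as `N → ∞`. -/
def SingularOnAverage (α : FF K) : Prop :=
  ∀ c : ℝ, 0 < c →
    Filter.Tendsto
      (fun N : ℕ =>
        (((Finset.Icc 1 N).filter (fun l : ℕ =>
            ∃ Q : Polynomial K, Q ≠ 0 ∧ fnorm (polyF Q) ≤ 2 ^ l ∧
              fnorm (fracPart (polyF Q * α)) ≤ c / 2 ^ l)).card : ℝ) / (N : ℝ))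
      Filter.atTop (nhds 1)

end CF

end FPSDA

open FPSDA MeasureTheory

/-!
A sequence of polynomials `R n` of degree `n` assigns to each `θ` in the open unit ball its digits,
the residues of `R n * θ`. Take `R n = zⁿ⁻ᵈ Q_k` for `d = deg Q_k ≤ n < deg Q_{k+1}`. Since the
error of `Q_k` has degree `-deg Q_{k+1}` and residues ignore polynomials, the `n`-th digit of `α x`
vanishes for `n + deg x + 1 < deg Q_k + deg Q_{k+1}` and does not vanish in the case of equality.
Hence `θ` is badly approximable as soon as its digits at the positions `deg Q_k` do not vanish,
whereas a nonzero digit at `deg Q_k` followed by `C` vanishing digits from `deg Q_{k+1}` on yields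
some `x` with `‖x‖ ⟨α x - θ⟩ < q ^ (-(C + 1))`.

If `deg Q_k / k → ∞`, the positions `deg Q_k` have density zero, so prescribing the digits there
costs no dimension. Otherwise, at infinitely many scales the number of forbidden patterns is at
least a fixed proportion of the number of digits, which lowers the dimension below `1`.
-/

namespace FPSDA

section Growth

lemma tendsto_zpow_rpow_one_div_atTop_iff {b : ℝ} (hb : 1 < b) {d : ℕ → ℕ} :
    Tendsto (fun k : ℕ => (b ^ (d k : ℤ)) ^ (1 / (k : ℝ))) atTop atTop ↔
      Tendsto (fun k => (d k : ℝ) / k) atTop atTop := by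
  have hb0 : 0 < b := one_pos.trans hb
  have hexp (k : ℕ) : (b ^ (d k : ℤ)) ^ (1 / (k : ℝ)) = Real.exp (Real.log b * (d k / k)) := by
    rw [← Real.rpow_def_of_pos hb0, zpow_natCast, ← Real.rpow_natCast, ← Real.rpow_mul hb0.le,
      mul_one_div]
  simp only [hexp, Real.tendsto_exp_comp_atTop, tendsto_const_mul_atTop_of_pos (Real.log_pos hb)]

lemma tendsto_div_atTop_of_tendsto_comp_mul {D : ℕ → ℕ} (hD : Monotone D) {p : ℕ} (hp : 0 < p)
    (h : Tendsto (fun j => (D (p * j) : ℝ) / j) atTop atTop) :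
    Tendsto (fun k => (D k : ℝ) / k) atTop atTop := by
  have hdiv : Tendsto (fun k => (D (p * (k / p)) : ℝ) / (k / p : ℕ) / (2 * p)) atTop atTop :=
    (h.comp (Nat.tendsto_div_const_atTop hp.ne')).atTop_div_const (by positivity)
  refine tendsto_atTop_mono' _ ?_ hdiv
  filter_upwards [eventually_ge_atTop p] with k hk
  have hj : 0 < k / p := Nat.div_pos hk hp
  have hk_le : (k : ℝ) ≤ (k / p : ℕ) * (2 * p) := by
    have h1 := Nat.lt_mul_div_succ k hp
    have h2 : p * 1 ≤ p * (k / p) := Nat.mul_le_mul_left p hj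
    rw [mul_add] at h1
    exact_mod_cast (show k ≤ k / p * (2 * p) by linarith)
  rw [div_div]
  gcongr
  · exact_mod_cast hp.trans_le hk
  · exact hD (Nat.mul_div_le k p)

lemma exists_pow_mul_pow_le_rpow {b ρ : ℝ} (hb : 1 < b) (hρ₀ : 0 < ρ) (hρ : ρ < 1) (M : ℝ) :
    ∃ s : ℝ≥0, s < 1 ∧ ∀ E J : ℕ, (E : ℝ) ≤ M * J → b ^ E * ρ ^ J ≤ (b ^ E) ^ (s : ℝ) := by
  have hb₀ : 0 < b := one_pos.trans hb
  obtain ⟨t, hle, ht₀, ht₁⟩ : ∃ t : ℝ, b ^ (t * M) * ρ < 1 ∧ 0 < t ∧ t < 1 := by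
    have hcont : ContinuousAt (fun t : ℝ => b ^ (t * M) * ρ) 0 := by
      fun_prop (disch := simp [hb₀.ne'])
    have hlt : ∀ᶠ t : ℝ in nhdsWithin 0 (Set.Ioi 0), b ^ (t * M) * ρ < 1 :=
      nhdsWithin_le_nhds (hcont.eventually_lt_const (by simpa using hρ))
    exact (hlt.and (Ioo_mem_nhdsGT one_pos)).exists
  obtain ⟨s, hs⟩ : ∃ s : ℝ≥0, (s : ℝ) = 1 - t := ⟨_, Real.coe_toNNReal (1 - t) (by linarith)⟩
  refine ⟨s, by rw [← NNReal.coe_lt_coe, hs]; simpa using ht₀, fun E J hE => ?_⟩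
  have hEJ : (b ^ E) ^ t ≤ (b ^ (t * M)) ^ J := by
    rw [← Real.rpow_natCast, ← Real.rpow_natCast, ← Real.rpow_mul hb₀.le, ← Real.rpow_mul hb₀.le]
    exact Real.rpow_le_rpow_of_exponent_le hb.le (by nlinarith)
  rw [hs, Real.rpow_sub (by positivity), Real.rpow_one, le_div_iff₀ (by positivity), mul_assoc]
  refine mul_le_of_le_one_right (by positivity) ?_
  calc ρ ^ J * (b ^ E) ^ t ≤ ρ ^ J * (b ^ (t * M)) ^ J := by gcongr
    _ = (b ^ (t * M) * ρ) ^ J := by rw [mul_pow, mul_comm]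
    _ ≤ 1 := pow_le_one₀ (by positivity) hle.le

lemma exists_mul_le_count_notMem_range {D : ℕ → ℕ}
    (hD : Tendsto (fun k => (D k : ℝ) / k) atTop atTop) {r : ℝ} (hr : r < 1) :
    ∃ C : ℕ, ∀ N : ℕ, r * N ≤ Nat.count (· ∉ Set.range D) N + C := by
  obtain ⟨k₀, hk₀⟩ := eventually_atTop.mp (hD.eventually_ge_atTop (1 - r)⁻¹)
  refine ⟨k₀ + 1, fun N => ?_⟩
  have hmem : (Finset.range N).filter (· ∈ Set.range D) ⊆
      (Finset.range (k₀ + 1 + ⌊(1 - r) * N⌋₊)).image D := by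
    intro n hn
    simp only [Finset.mem_filter, Finset.mem_range] at hn
    obtain ⟨hn, k, rfl⟩ := hn
    refine Finset.mem_image_of_mem D (Finset.mem_range.mpr ?_)
    by_contra! hk
    have hk_pos : (0 : ℝ) < k := Nat.cast_pos.mpr (by omega)
    have hkN : (k : ℝ) ≤ (1 - r) * N := by
      have h := hk₀ k (by omega)
      rw [le_div_iff₀ hk_pos, inv_mul_le_iff₀ (sub_pos.mpr hr)] at h
      refine h.trans (mul_le_mul_of_nonneg_left ?_ (sub_pos.mpr hr).le)
      exact_mod_cast hn.le
    have := Nat.le_floor hkN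
    omega
  have hcard : N ≤ Nat.count (· ∉ Set.range D) N + (k₀ + 1 + ⌊(1 - r) * N⌋₊) := by
    have hsplit := Finset.card_filter_add_card_filter_not (s := Finset.range N) (· ∈ Set.range D)
    rw [← Nat.count_eq_card_filter_range (· ∉ Set.range D), Finset.card_range] at hsplit
    have := (Finset.card_le_card hmem).trans Finset.card_image_le
    rw [Finset.card_range] at this
    omega
  have hfloor : (⌊(1 - r) * N⌋₊ : ℝ) ≤ (1 - r) * N :=
    Nat.floor_le (mul_nonneg (sub_pos.mpr hr).le N.cast_nonneg)
  have hcard' : (N : ℝ) ≤ Nat.count (· ∉ Set.range D) N + (k₀ + 1 + ⌊(1 - r) * N⌋₊ : ℕ) := by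
    exact_mod_cast hcard
  push_cast at hcard' ⊢
  linarith

end Growth

section Windows

variable {A : Type*}

/-- The words of length `L` which occur at position `m` in the sequences of `X`. -/
def window (X : Set (ℕ → A)) (m L : ℕ) : Set (Fin L → A) :=
  (fun a (i : Fin L) => a (m + i)) '' X

lemma ncard_window_add_le [Finite A] (X : Set (ℕ → A)) (m L L' : ℕ) :
    (window X m (L + L')).ncard ≤ (window X m L).ncard * (window X (m + L) L').ncard := by
  rw [← Set.ncard_prod]
  refine Set.ncard_le_ncard_of_injOn
    (fun w => (fun i => w (Fin.castAdd L' i), fun i => w (Fin.natAdd L i))) ?_ ?_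
  · rintro _ ⟨a, ha, rfl⟩
    exact ⟨⟨a, ha, rfl⟩, a, ha, funext fun i => by simp [add_assoc]⟩
  · intro w _ w' _ h
    obtain ⟨hl, hr⟩ := Prod.mk.inj h
    exact funext (Fin.addCases (congrFun hl) (congrFun hr))

variable [Fintype A]

lemma ncard_window_le_pow (X : Set (ℕ → A)) (m L : ℕ) :
    (window X m L).ncard ≤ Fintype.card A ^ L :=
  (Set.ncard_le_card _).trans_eq (by simp)

lemma ncard_setOf_agree {m L : ℕ} {T : Finset ℕ} (hT : T ⊆ Finset.Ico m (m + L)) (v : ℕ → A) :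
    {w : Fin L → A | ∀ i : Fin L, m + i ∈ T → w i = v (m + i)}.ncard =
      Fintype.card A ^ (L - T.card) := by
  have hpi : {w : Fin L → A | ∀ i : Fin L, m + i ∈ T → w i = v (m + i)} =
      Fintype.piFinset fun i : Fin L => if m + i ∈ T then {v (m + i)} else Finset.univ := by
    ext w
    simp only [Set.mem_ofPred_eq, Finset.mem_coe, Fintype.mem_piFinset]
    refine forall_congr' fun i => ?_
    split_ifs with hi <;> simp [hi]
  have hcard : (Finset.univ.filter fun i : Fin L => m + i ∈ T).card = T.card := by
    refine Finset.card_bij (fun i _ => m + i) (by simp) (by simp [Fin.ext_iff]) fun n hn => ?_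
    have := Finset.mem_Ico.mp (hT hn)
    exact ⟨⟨n - m, by omega⟩, by simp [Nat.add_sub_cancel' this.1, hn],
      Nat.add_sub_cancel' this.1⟩
  rw [hpi, Set.ncard_coe_finset, Fintype.card_piFinset]
  simp only [apply_ite Finset.card, Finset.card_singleton, Finset.card_univ]
  rw [Finset.prod_ite, Finset.prod_const_one, one_mul, Finset.prod_const,
    ← Finset.compl_filter, Finset.card_compl, hcard, Fintype.card_fin]

variable [Nonempty A] {X : Set (ℕ → A)} {v : ℕ → A}

lemma ncard_window_le_of_avoid {m L b : ℕ} {T : Finset ℕ} (hT : T ⊆ Finset.Ico m (m + L))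
    (hb : T.card ≤ b) (h : ∀ a ∈ X, ∃ n ∈ T, a n ≠ v n) :
    ((window X m L).ncard : ℝ) ≤
      (Fintype.card A : ℝ) ^ L * (1 - ((Fintype.card A : ℝ) ^ b)⁻¹) := by
  have hA : 1 ≤ (Fintype.card A : ℝ) := Nat.one_le_cast.mpr Fintype.card_pos
  set Y := {w : Fin L → A | ∀ i : Fin L, m + i ∈ T → w i = v (m + i)}
  have hdisj : Disjoint (window X m L) Y := by
    refine Set.disjoint_left.mpr ?_
    rintro _ ⟨a, ha, rfl⟩ hY
    obtain ⟨n, hn, hne⟩ := h a ha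
    obtain ⟨i, rfl⟩ := Nat.exists_eq_add_of_le (Finset.mem_Ico.mp (hT hn)).1
    have hi := (Finset.mem_Ico.mp (hT hn)).2
    exact hne (hY ⟨i, by omega⟩ hn)
  have hsum : (window X m L).ncard + Fintype.card A ^ (L - T.card) ≤ Fintype.card A ^ L := by
    rw [← ncard_setOf_agree hT v, ← Set.ncard_union_eq hdisj]
    exact (Set.ncard_le_card _).trans_eq (by simp)
  have hsum' : ((window X m L).ncard : ℝ) + (Fintype.card A : ℝ) ^ (L - T.card) ≤
      (Fintype.card A : ℝ) ^ L := by
    exact_mod_cast hsum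
  have hLT : T.card ≤ L := (Finset.card_le_card hT).trans_eq (by simp)
  have hpow : (Fintype.card A : ℝ) ^ L * ((Fintype.card A : ℝ) ^ b)⁻¹ ≤
      (Fintype.card A : ℝ) ^ (L - T.card) := by
    rw [pow_sub₀ _ (by positivity) hLT]
    gcongr
  linarith

lemma ncard_window_le_of_forall_avoid {E : ℕ → ℕ} (hE : Monotone E) {T : ℕ → Finset ℕ} {b J₀ : ℕ}
    (hT : ∀ j, T j ⊆ Finset.Ico (E j) (E (j + 1))) (hb : ∀ j, (T j).card ≤ b)
    {v : ℕ → ℕ → A} (h : ∀ a ∈ X, ∀ j ≥ J₀, ∃ n ∈ T j, a n ≠ v j n) (J : ℕ) :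
    ((window X 0 (E (J₀ + J))).ncard : ℝ) ≤
      (Fintype.card A : ℝ) ^ E (J₀ + J) * (1 - ((Fintype.card A : ℝ) ^ b)⁻¹) ^ J := by
  induction J with
  | zero =>
    simpa using mod_cast ncard_window_le_pow X 0 (E J₀)
  | succ J ih =>
    obtain ⟨L, hL⟩ := Nat.exists_eq_add_of_le (hE (J₀ + J).le_succ)
    have hstep : ((window X (E (J₀ + J)) L).ncard : ℝ) ≤ _ :=
      ncard_window_le_of_avoid (hL ▸ hT (J₀ + J)) (hb _) fun a ha =>
        h a ha (J₀ + J) (Nat.le_add_right _ _)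
    have hadd := ncard_window_add_le X 0 (E (J₀ + J)) L
    rw [zero_add] at hadd
    calc ((window X 0 (E (J₀ + (J + 1)))).ncard : ℝ)
        ≤ (window X 0 (E (J₀ + J))).ncard * (window X (E (J₀ + J)) L).ncard := by
          rw [← add_assoc, hL]
          exact_mod_cast hadd
      _ ≤ _ := mul_le_mul ih hstep (by positivity) ((Nat.cast_nonneg _).trans ih)
      _ = _ := by
          rw [← add_assoc J₀, hL, pow_add, pow_succ]
          ring

end Windows

variable {K : Type*} [Field K]

section Coefficients

lemma toL_mul (x y : FF K) : toL (x * y) = toL x * toL y :=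
  rfl

lemma polyF_zero : polyF (0 : Polynomial K) = 0 :=
  map_zero (Polynomial.aeval (HahnSeries.single (-1 : ℤ) (1 : K)))

lemma polyF_one : polyF (1 : Polynomial K) = 1 :=
  map_one (Polynomial.aeval (HahnSeries.single (-1 : ℤ) (1 : K)))

lemma polyF_add (P Q : Polynomial K) : polyF (P + Q) = polyF P + polyF Q :=
  map_add (Polynomial.aeval (HahnSeries.single (-1 : ℤ) (1 : K))) P Q

lemma polyF_mul (P Q : Polynomial K) : polyF (P * Q) = polyF P * polyF Q :=
  map_mul (Polynomial.aeval (HahnSeries.single (-1 : ℤ) (1 : K))) P Q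

lemma toL_polyF_monomial (n : ℕ) (c : K) :
    toL (polyF (Polynomial.monomial n c)) = HahnSeries.single (-(n : ℤ)) c := by
  change Polynomial.aeval (HahnSeries.single (-1 : ℤ) (1 : K)) (Polynomial.monomial n c) = _
  rw [Polynomial.aeval_monomial, HahnSeries.single_pow, HahnSeries.algebraMap_apply']
  simp [HahnSeries.C_apply, HahnSeries.single_mul_single]

lemma coeff_polyF (P : Polynomial K) (i : ℤ) :
    (toL (polyF P)).coeff i = if i ≤ 0 then P.coeff (-i).toNat else 0 := by
  induction P using Polynomial.induction_on' with
  | add P Q hP hQ =>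
    rw [polyF_add]
    change (toL (polyF P) + toL (polyF Q)).coeff i = _
    rw [HahnSeries.coeff_add, hP, hQ]
    split_ifs <;> simp
  | monomial n c =>
    rw [toL_polyF_monomial, HahnSeries.coeff_single, Polynomial.coeff_monomial]
    by_cases h : i = -(n : ℤ)
    · simp [h]
    · rw [if_neg h]
      split_ifs <;> first | rfl | omega

lemma polyF_eq_zero {P : Polynomial K} : polyF P = 0 ↔ P = 0 := by
  refine ⟨fun h => Polynomial.ext fun n => ?_, fun h => h ▸ polyF_zero⟩
  have hn := coeff_polyF P (-n)
  simpa [h] using hn.symm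

lemma coeff_intPoly (x : FF K) (i : ℕ) : (intPoly x).coeff i = (toL x).coeff (-(i : ℤ)) := by
  unfold intPoly
  simp only [Polynomial.finsetSum_coeff, Polynomial.coeff_monomial]
  rw [Finset.sum_ite_eq']
  split_ifs with h
  · rfl
  · refine (HahnSeries.coeff_eq_zero_of_lt_order ?_).symm
    simp only [Finset.mem_range, not_lt] at h
    omega

lemma sub_polyF_intPoly (x : FF K) : x - polyF (intPoly x) = fracPart x := by
  change toL (x - polyF (intPoly x)) = toL (fracPart x)
  ext i
  change (toL x - toL (polyF (intPoly x))).coeff i = if 1 ≤ i then (toL x).coeff i else 0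
  rw [HahnSeries.coeff_sub, coeff_polyF]
  split_ifs with hi h1 h1
  · omega
  · rw [coeff_intPoly, Int.toNat_of_nonneg (by omega), neg_neg, sub_self]
  · exact sub_zero _
  · omega

/-- The residue of `x = ∑ aᵢ z⁻ⁱ`, that is the coefficient `a₁` of `z⁻¹`; it only depends on `x`
modulo polynomials. -/
def residue : FF K →+ K where
  toFun x := (toL x).coeff 1
  map_zero' := rfl
  map_add' _ _ := rfl

lemma residue_polyF (P : Polynomial K) : residue (polyF P) = 0 :=
  (coeff_polyF P 1).trans (if_neg (by norm_num))

lemma residue_polyF_mul (P : Polynomial K) (x : FF K) :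
    residue (polyF P * x) = P.sum fun j c => c * (toL x).coeff (j + 1) := by
  induction P using Polynomial.induction_on' with
  | add P Q hP hQ =>
    rw [polyF_add, add_mul, map_add, hP, hQ,
      Polynomial.sum_add_index _ _ _ (by simp) fun _ _ _ => add_mul _ _ _]
  | monomial n c =>
    rw [Polynomial.sum_monomial_index c (fun j c => c * (toL x).coeff (j + 1)) (zero_mul _)]
    change (toL (polyF (Polynomial.monomial n c) * x)).coeff 1 = _
    rw [toL_mul, toL_polyF_monomial, HahnSeries.coeff_single_mul, sub_neg_eq_add, add_comm]

/-- The `n`-th digit of `θ` with respect to a sequence `S` of polynomials with `deg (S n) = n`,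
namely the residue of `S n * θ`. For `S n = zⁿ` this is the coefficient of `z⁻⁽ⁿ⁺¹⁾`. -/
def digit (S : Polynomial.Sequence K) (n : ℕ) : FF K →+ K :=
  residue.comp (AddMonoidHom.mulLeft (polyF (S n)))

lemma digit_apply (S : Polynomial.Sequence K) (n : ℕ) (θ : FF K) :
    digit S n θ = residue (polyF (S n) * θ) :=
  rfl

lemma digit_polyF (S : Polynomial.Sequence K) (n : ℕ) (P : Polynomial K) :
    digit S n (polyF P) = 0 := by
  rw [digit_apply, ← polyF_mul, residue_polyF]

/-- The coefficients of the element with prescribed digits `a`: the digits are given by a triangular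
linear system, which is solved by forward substitution. -/
def solveDigits (S : Polynomial.Sequence K) (a : ℕ → K) (n : ℕ) : K :=
  (a n - ∑ j : Fin n, (S n).coeff j * solveDigits S a j) / (S n).leadingCoeff
termination_by n

lemma sum_coeff_mul_solveDigits (S : Polynomial.Sequence K) (a : ℕ → K) (n : ℕ) :
    ∑ j ∈ Finset.range (n + 1), (S n).coeff j * solveDigits S a j = a n := by
  have hlead : (S n).coeff n = (S n).leadingCoeff := by
    rw [Polynomial.leadingCoeff, S.natDegree_eq]
  have hne : (S n).leadingCoeff ≠ 0 := Polynomial.leadingCoeff_ne_zero.mpr (S.ne_zero n)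
  rw [Finset.sum_range_succ, hlead, solveDigits, mul_div_cancel₀ _ hne,
    Finset.sum_range fun j => (S n).coeff j * solveDigits S a j, add_sub_cancel]

end Coefficients

section ConvergentErrors

lemma FIrrational.ne_zero {α : FF K} (hα : FIrrational α) : α ≠ 0 := by
  rintro rfl
  exact hα 0 1 one_ne_zero (by rw [polyF_zero, zero_mul])

lemma gaussMap_eq (x : FF K) : gaussMap x = x⁻¹ - polyF (intPoly x⁻¹) :=
  (sub_polyF_intPoly x⁻¹).symm

lemma FIrrational.gaussMap {α : FF K} (hα : FIrrational α) : FIrrational (gaussMap α) := by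
  intro P Q hQ h
  have hR : polyF Q = α * polyF (P + intPoly α⁻¹ * Q) := by
    rw [polyF_add, polyF_mul, ← h, gaussMap_eq, ← add_mul, sub_add_cancel,
      mul_inv_cancel_left₀ hα.ne_zero]
  refine hα Q (P + intPoly α⁻¹ * Q) (fun h0 => hQ ?_) hR.symm
  rwa [h0, polyF_zero, mul_zero, polyF_eq_zero] at hR

lemma FIrrational.iterate_gaussMap {α : FF K} (hα : FIrrational α) (k : ℕ) :
    FIrrational (FPSDA.gaussMap^[k] α) :=
  Function.Iterate.rec FIrrational hα (fun _ h => h.gaussMap) k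

lemma iterate_gaussMap_succ (α : FF K) (k : ℕ) :
    gaussMap^[k + 1] α = (gaussMap^[k] α)⁻¹ - polyF (pquot α k) := by
  rw [Function.iterate_succ_apply', gaussMap_eq]
  rfl

/-- The error `Q_k α - P_k` of the `k`-th convergent, which equals
`(-1)ᵏ α · T α · ⋯ · Tᵏ α` for the Gauss map `T`. -/
def convergentError (α : FF K) : ℕ → FF K
  | 0 => α
  | k + 1 => -(gaussMap^[k + 1] α * convergentError α k)

lemma convergentError_add_two {α : FF K} (hα : FIrrational α) (k : ℕ) :
    convergentError α (k + 2) =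
      polyF (pquot α (k + 1)) * convergentError α (k + 1) + convergentError α k := by
  have hT := (hα.iterate_gaussMap (k + 1)).ne_zero
  simp only [convergentError]
  rw [iterate_gaussMap_succ α (k + 1)]
  field_simp
  ring

lemma exists_mul_polyF_cfQ_eq {α : FF K} (hα : FIrrational α) (k : ℕ) :
    ∃ P, α * polyF (cfQ α k) = convergentError α k + polyF P := by
  induction k using Nat.twoStepInduction with
  | zero =>
    refine ⟨0, ?_⟩
    simp only [cfQ, convergentError, polyF_one, polyF_zero, mul_one, add_zero]
  | one =>
    refine ⟨1, ?_⟩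
    simp only [cfQ, convergentError, polyF_one]
    rw [iterate_gaussMap_succ, Function.iterate_zero_apply, sub_mul, inv_mul_cancel₀ hα.ne_zero]
    ring
  | more k ihk ihk' =>
    obtain ⟨P, hP⟩ := ihk
    obtain ⟨P', hP'⟩ := ihk'
    refine ⟨pquot α (k + 1) * P' + P, ?_⟩
    rw [convergentError_add_two hα]
    simp only [cfQ, polyF_add, polyF_mul]
    linear_combination polyF (pquot α (k + 1)) * hP' + hP

end ConvergentErrors

variable [Fintype K]

/-- The cardinality `q` of the finite field `K`, as a real number. -/
local notation "q" => (Fintype.card K : ℝ)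

section Norm

lemma one_lt_q : 1 < q := by
  exact_mod_cast Fintype.one_lt_card

lemma q_pos : 0 < q :=
  one_pos.trans one_lt_q

lemma fnorm_of_ne_zero {x : FF K} (hx : x ≠ 0) : fnorm x = q ^ (-(toL x).order) :=
  if_neg hx

lemma fnorm_zero : fnorm (0 : FF K) = 0 :=
  fnorm_eq_zero.mpr rfl

lemma fnorm_pos {x : FF K} (hx : x ≠ 0) : 0 < fnorm x :=
  (fnorm_nonneg x).lt_of_ne' (mt fnorm_eq_zero.mp hx)

lemma fnorm_mul (x y : FF K) : fnorm (x * y) = fnorm x * fnorm y := by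
  rcases eq_or_ne x 0 with rfl | hx
  · simp [fnorm_zero]
  rcases eq_or_ne y 0 with rfl | hy
  · simp [fnorm_zero]
  rw [fnorm_of_ne_zero hx, fnorm_of_ne_zero hy, fnorm_of_ne_zero (mul_ne_zero hx hy), toL_mul,
    HahnSeries.order_mul (mt toL_eq_zero.mp hx) (mt toL_eq_zero.mp hy), neg_add,
    zpow_add₀ q_pos.ne']

lemma fnorm_one : fnorm (1 : FF K) = 1 := by
  have h := fnorm_mul (1 : FF K) 1
  rw [mul_one] at h
  exact (mul_eq_left₀ (fnorm_pos one_ne_zero).ne').mp h.symm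

lemma fnorm_inv (x : FF K) : fnorm x⁻¹ = (fnorm x)⁻¹ := by
  rcases eq_or_ne x 0 with rfl | hx
  · simp [fnorm_zero]
  · exact eq_inv_of_mul_eq_one_left (by rw [← fnorm_mul, inv_mul_cancel₀ hx, fnorm_one])

lemma fnorm_sub_le (x y : FF K) : fnorm (x - y) ≤ max (fnorm x) (fnorm y) := by
  rw [sub_eq_add_neg, ← fnorm_neg y]
  exact fnorm_add_le _ _

lemma fnorm_sub_eq_left {x y : FF K} (h : fnorm y < fnorm x) : fnorm (x - y) = fnorm x := by
  refine le_antisymm ((fnorm_sub_le x y).trans_eq (max_eq_left h.le)) ?_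
  have hx : fnorm x ≤ max (fnorm (x - y)) (fnorm y) := by
    simpa using fnorm_add_le (x - y) y
  exact (le_max_iff.mp hx).resolve_right h.not_ge

lemma fnorm_lt_zpow_neg_iff {x : FF K} {m : ℤ} :
    fnorm x < q ^ (-m) ↔ ∀ i ≤ m, (toL x).coeff i = 0 := by
  rcases eq_or_ne x 0 with rfl | hx
  · simp [fnorm_zero, zpow_pos q_pos]
  · rw [fnorm_of_ne_zero hx, zpow_lt_zpow_iff_right₀ one_lt_q, neg_lt_neg_iff, ← Int.add_one_le_iff,
      HahnSeries.le_order_iff_forall (mt toL_eq_zero.mp hx)]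
    simp only [Int.lt_add_one_iff]

lemma fnorm_lt_one_iff {x : FF K} : fnorm x < 1 ↔ ∀ i ≤ 0, (toL x).coeff i = 0 := by
  simpa using fnorm_lt_zpow_neg_iff (x := x) (m := 0)

end Norm

section Polynomials

lemma fnorm_polyF {P : Polynomial K} (hP : P ≠ 0) : fnorm (polyF P) = q ^ (P.natDegree : ℤ) := by
  have h0 : polyF P ≠ 0 := mt polyF_eq_zero.mp hP
  rw [fnorm_of_ne_zero h0]
  congr 1
  have hle : (toL (polyF P)).order ≤ -(P.natDegree : ℤ) := by
    refine HahnSeries.order_le_of_coeff_ne_zero ?_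
    simpa [coeff_polyF] using hP
  have hge : -(P.natDegree : ℤ) ≤ (toL (polyF P)).order := by
    rw [HahnSeries.le_order_iff_forall (mt toL_eq_zero.mp h0)]
    intro i hi
    rw [coeff_polyF, if_pos (by omega)]
    exact Polynomial.coeff_eq_zero_of_natDegree_lt (by omega)
  omega

lemma fnorm_fracPart_lt_one (x : FF K) : fnorm (fracPart x) < 1 :=
  fnorm_lt_one_iff.mpr fun _ hi => if_neg (by omega)

lemma sdist_le (x : FF K) (P : Polynomial K) : sdist x ≤ fnorm (x - polyF P) :=
  ciInf_le ⟨0, Set.forall_mem_range.mpr fun _ => fnorm_nonneg _⟩ P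

lemma le_sdist {x : FF K} {c : ℝ} (h : ∀ P, c ≤ fnorm (x - polyF P)) : c ≤ sdist x :=
  le_ciInf h

end Polynomials

section Digits

lemma residue_eq_zero_iff {x : FF K} (hx : fnorm x < 1) :
    residue x = 0 ↔ fnorm x < q ^ (-1 : ℤ) := by
  rw [fnorm_lt_zpow_neg_iff]
  refine ⟨fun h i hi => ?_, fun h => h 1 le_rfl⟩
  rcases hi.eq_or_lt with rfl | hi
  · exact h
  · exact fnorm_lt_one_iff.mp hx i (by omega)

lemma fnorm_polyF_sequence (S : Polynomial.Sequence K) (n : ℕ) :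
    fnorm (polyF (S n)) = q ^ (n : ℤ) := by
  rw [fnorm_polyF (S.ne_zero n), S.natDegree_eq]

lemma digit_eq_zero_iff (S : Polynomial.Sequence K) {n : ℕ} {θ : FF K}
    (hθ : fnorm θ < q ^ (-n : ℤ)) :
    digit S n θ = 0 ↔ fnorm θ < q ^ (-(n + 1 : ℕ) : ℤ) := by
  have hlt (m : ℤ) : fnorm (polyF (S n) * θ) < q ^ m ↔ fnorm θ < q ^ (m - n) := by
    rw [fnorm_mul, fnorm_polyF_sequence, zpow_sub₀ q_pos.ne', lt_div_iff₀' (zpow_pos q_pos _)]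
  have h1 : fnorm (polyF (S n) * θ) < 1 := by
    simpa using (hlt 0).mpr (by simpa using hθ)
  rw [digit_apply, residue_eq_zero_iff h1, hlt]
  congr! 2
  push_cast
  ring

lemma fnorm_lt_zpow_neg_iff_digit (S : Polynomial.Sequence K) {θ : FF K} (hθ : fnorm θ < 1)
    (N : ℕ) : fnorm θ < q ^ (-N : ℤ) ↔ ∀ n < N, digit S n θ = 0 := by
  induction N with
  | zero => simpa using hθ
  | succ N ih =>
    have hmono : q ^ (-(N + 1 : ℕ) : ℤ) ≤ q ^ (-N : ℤ) :=
      zpow_le_zpow_right₀ one_le_q (by omega)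
    rw [Nat.forall_lt_succ_right, ← ih]
    exact ⟨fun h => ⟨h.trans_le hmono, (digit_eq_zero_iff S (h.trans_le hmono)).mpr h⟩,
      fun h => (digit_eq_zero_iff S h.1).mp h.2⟩

lemma fnorm_lt_zpow_neg_of_digit_eq (S : Polynomial.Sequence K) {θ η : FF K} (hθ : fnorm θ < 1)
    (hη : fnorm η < 1) {N : ℕ} (h : ∀ n < N, digit S n θ = digit S n η) :
    fnorm (θ - η) < q ^ (-N : ℤ) :=
  (fnorm_lt_zpow_neg_iff_digit S ((fnorm_sub_le θ η).trans_lt (max_lt hθ hη)) N).mpr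
    fun n hn => by rw [map_sub, h n hn, sub_self]

lemma exists_digit_eq (S : Polynomial.Sequence K) (a : ℕ → K) :
    ∃ θ : FF K, fnorm θ < 1 ∧ ∀ n, digit S n θ = a n := by
  let f : PowerSeries K := PowerSeries.X * PowerSeries.mk (solveDigits S a)
  let θ : FF K := HahnSeries.ofPowerSeries ℤ K f
  have hcoeff (j : ℕ) : (toL θ).coeff (j + 1) = solveDigits S a j := by
    change (HahnSeries.ofPowerSeries ℤ K f).coeff (j + 1) = _
    rw [← Nat.cast_succ, HahnSeries.ofPowerSeries_apply_coeff, PowerSeries.coeff_succ_X_mul,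
      PowerSeries.coeff_mk]
  refine ⟨θ, fnorm_lt_one_iff.mpr fun i hi => ?_, fun n => ?_⟩
  · change (HahnSeries.ofPowerSeries ℤ K f).coeff i = 0
    rcases hi.eq_or_lt with rfl | hi
    · exact (HahnSeries.ofPowerSeries_apply_coeff f 0).trans (PowerSeries.coeff_zero_X_mul _)
    · exact
        HahnSeries.embDomain_of_notMem_range fun ⟨k, hk⟩ => hi.not_ge (hk ▸ Int.natCast_nonneg k)
  · rw [digit_apply, residue_polyF_mul, Polynomial.sum_over_range' _ (by simp) (n + 1)
      (by rw [S.natDegree_eq]; omega)]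
    simp only [hcoeff, sum_coeff_mul_solveDigits]

end Digits

section DimensionUpperBound

/-- The set of all `θ` in the open unit ball whose sequence of digits belongs to `X`. -/
def digitSet (S : Polynomial.Sequence K) (X : Set (ℕ → K)) : Set (FF K) :=
  {θ | fnorm θ < 1 ∧ (fun n => digit S n θ) ∈ X}

lemma edist_eq_ofReal_fnorm (θ η : FF K) : edist θ η = ENNReal.ofReal (fnorm (θ - η)) :=
  edist_dist θ η

/-- The set of all `θ` in the open unit ball whose digits begin with the word `w`. -/
def cylinder (S : Polynomial.Sequence K) {N : ℕ} (w : Fin N → K) : Set (FF K) :=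
  {θ | fnorm θ < 1 ∧ ∀ i : Fin N, digit S i θ = w i}

lemma digitSet_subset_iUnion_cylinder (S : Polynomial.Sequence K) (X : Set (ℕ → K)) (N : ℕ) :
    digitSet S X ⊆ ⋃ w : window X 0 N, cylinder S w.1 := fun _ hθ =>
  Set.mem_iUnion.mpr ⟨⟨_, _, hθ.2, rfl⟩, hθ.1, fun i => by simp⟩

lemma ediam_cylinder_le (S : Polynomial.Sequence K) {N : ℕ} (w : Fin N → K) :
    Metric.ediam (cylinder S w) ≤ ENNReal.ofReal (q ^ N)⁻¹ := by
  refine Metric.ediam_le fun θ hθ η hη => ?_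
  rw [edist_eq_ofReal_fnorm, ← zpow_natCast, ← zpow_neg]
  refine ENNReal.ofReal_le_ofReal (fnorm_lt_zpow_neg_of_digit_eq S hθ.1 hη.1 fun n hn => ?_).le
  exact (hθ.2 ⟨n, hn⟩).trans (hη.2 ⟨n, hn⟩).symm

lemma sum_ediam_cylinder_rpow_le (S : Polynomial.Sequence K) {N : ℕ} (W : Set (Fin N → K))
    {s : ℝ} (hs : 0 ≤ s) :
    ∑ w : W, Metric.ediam (cylinder S w.1) ^ s ≤ ENNReal.ofReal (W.ncard / (q ^ N) ^ s) := by
  have hpos : 0 < q ^ N := pow_pos q_pos N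
  calc ∑ w : W, Metric.ediam (cylinder S w.1) ^ s
      ≤ ∑ _w : W, ENNReal.ofReal (q ^ N)⁻¹ ^ s :=
        Finset.sum_le_sum fun w _ => ENNReal.rpow_le_rpow (ediam_cylinder_le S w.1) hs
    _ = ENNReal.ofReal (W.ncard / (q ^ N) ^ s) := by
        rw [Finset.sum_const, ENNReal.ofReal_rpow_of_pos (inv_pos.mpr hpos), nsmul_eq_mul,
          Real.inv_rpow hpos.le, div_eq_mul_inv, ENNReal.ofReal_mul (Nat.cast_nonneg _),
          ENNReal.ofReal_natCast, Finset.card_univ, ← Nat.card_eq_fintype_card,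
          Nat.card_coe_set_eq]

lemma dimH_digitSet_le (S : Polynomial.Sequence K) {X : Set (ℕ → K)} {s : ℝ≥0} {C : ℝ}
    (h : ∃ᶠ N in atTop, ((window X 0 N).ncard : ℝ) ≤ C * (q ^ N) ^ (s : ℝ)) :
    dimH (digitSet S X) ≤ s := by
  choose N hN hcard using h.forall_exists_of_atTop
  have hdiam (n : ℕ) (w : window X 0 (N n)) :
      Metric.ediam (cylinder S w.1) ≤ ENNReal.ofReal (q ^ n)⁻¹ :=
    (ediam_cylinder_le S w.1).trans <| ENNReal.ofReal_le_ofReal <|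
      inv_anti₀ (pow_pos q_pos n) (pow_le_pow_right₀ one_le_q (hN n))
  have hsum (n : ℕ) :
      ∑ w : window X 0 (N n), Metric.ediam (cylinder S w.1) ^ (s : ℝ) ≤ ENNReal.ofReal C :=
    (sum_ediam_cylinder_rpow_le S _ s.2).trans <| ENNReal.ofReal_le_ofReal <|
      (div_le_iff₀ (Real.rpow_pos_of_pos (pow_pos q_pos _) _)).mpr (hcard n)
  have hscale : Tendsto (fun n : ℕ => ENNReal.ofReal (q ^ n)⁻¹) atTop (nhds 0) := by
    rw [← ENNReal.ofReal_zero]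
    exact ENNReal.tendsto_ofReal
      (tendsto_pow_atTop_atTop_of_one_lt one_lt_q).inv_tendsto_atTop
  have hliminf := Measure.hausdorffMeasure_le_liminf_sum (s : ℝ) (digitSet S X) _ hscale
    (fun n (w : window X 0 (N n)) => cylinder S w.1) (.of_forall hdiam)
    (.of_forall fun n => digitSet_subset_iUnion_cylinder S X (N n))
  have hmeasure : μH[(s : ℝ)] (digitSet S X) ≤ ENNReal.ofReal C :=
    hliminf.trans <| (liminf_le_liminf (.of_forall hsum)).trans_eq (liminf_const _)
  exact dimH_le_of_hausdorffMeasure_ne_top (ne_top_of_le_ne_top ENNReal.ofReal_ne_top hmeasure)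

lemma dimH_digitSet_le_one (S : Polynomial.Sequence K) (X : Set (ℕ → K)) :
    dimH (digitSet S X) ≤ 1 := by
  refine dimH_digitSet_le S (s := 1) (C := 1) (Frequently.of_forall fun N => ?_)
  simpa using mod_cast ncard_window_le_pow X 0 N

theorem dimH_digitSet_lt_one (S : Polynomial.Sequence K) {E : ℕ → ℕ} (hE : StrictMono E)
    (hgrowth : ¬Tendsto (fun j => (E j : ℝ) / j) atTop atTop) {T : ℕ → Finset ℕ} {b : ℕ}
    (hT : ∀ j, T j ⊆ Finset.Ico (E j) (E (j + 1))) (hb : ∀ j, (T j).card ≤ b)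
    (v : ℕ → ℕ → K) :
    dimH (digitSet S {a | ∀ᶠ j in atTop, ∃ n ∈ T j, a n ≠ v j n}) < 1 := by
  -- The exponent `b` would give `ρ = 0` in the case `b = 0`.
  set ρ : ℝ := 1 - (q ^ (b + 1))⁻¹
  have hqb : 1 < q ^ (b + 1) := one_lt_pow₀ one_lt_q b.succ_ne_zero
  have hρ₀ : 0 < ρ := sub_pos.mpr (inv_lt_one_of_one_lt₀ hqb)
  have hρ : ρ < 1 := sub_lt_self _ (by positivity)
  obtain ⟨M, hM⟩ : ∃ M : ℝ, ∃ᶠ j : ℕ in atTop, (E j : ℝ) / j < M := by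
    simpa [tendsto_atTop, Filter.Frequently] using hgrowth
  obtain ⟨s, hs, hbound⟩ := exists_pow_mul_pow_le_rpow (one_lt_q (K := K)) hρ₀ hρ M
  let X (J₀ : ℕ) : Set (ℕ → K) := {a | ∀ j ≥ J₀, ∃ n ∈ T j, a n ≠ v j n}
  have hle (J₀ : ℕ) : dimH (digitSet S (X J₀)) ≤ s := by
    refine dimH_digitSet_le S (C := (ρ ^ J₀)⁻¹) (hE.tendsto_atTop.frequently ?_)
    refine (hM.and_eventually (eventually_ge_atTop (J₀ + 1))).mono ?_
    rintro j ⟨hjM, hj⟩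
    obtain ⟨J, rfl⟩ := Nat.exists_eq_add_of_le (Nat.le_of_succ_le hj)
    have hcast : (0 : ℝ) < (J₀ + J : ℕ) := Nat.cast_pos.mpr (by omega)
    calc ((window (X J₀) 0 (E (J₀ + J))).ncard : ℝ)
        ≤ q ^ E (J₀ + J) * ρ ^ J :=
          ncard_window_le_of_forall_avoid hE.monotone hT (fun j => (hb j).trans b.le_succ)
            (fun _ ha => ha) J
      _ = (ρ ^ J₀)⁻¹ * (q ^ E (J₀ + J) * ρ ^ (J₀ + J)) := by
          rw [pow_add ρ]
          field_simp
      _ ≤ (ρ ^ J₀)⁻¹ * (q ^ E (J₀ + J)) ^ (s : ℝ) := by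
          gcongr
          exact hbound _ _ ((div_lt_iff₀ hcast).mp hjM).le
  have hunion : digitSet S {a | ∀ᶠ j in atTop, ∃ n ∈ T j, a n ≠ v j n} ⊆
      ⋃ J₀, digitSet S (X J₀) := by
    rintro θ ⟨hθ, ha⟩
    obtain ⟨J₀, hJ₀⟩ := eventually_atTop.mp ha
    exact Set.mem_iUnion.mpr ⟨J₀, hθ, hJ₀⟩
  calc dimH _ ≤ _ := dimH_mono hunion
    _ ≤ s := by
      rw [dimH_iUnion]
      exact iSup_le hle
    _ < 1 := by exact_mod_cast hs

end DimensionUpperBound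

section DimensionLowerBound

lemma exists_zpow_neg_succ_le_fnorm {x : FF K} (hx : x ≠ 0) (h : fnorm x < 1) :
    ∃ N : ℕ, fnorm x < q ^ (-N : ℤ) ∧ q ^ (-(N + 1 : ℕ) : ℤ) ≤ fnorm x := by
  have hord : 0 < (toL x).order := by
    rwa [fnorm_of_ne_zero hx, zpow_lt_one_iff_right₀ one_lt_q, neg_lt_zero] at h
  refine ⟨((toL x).order - 1).toNat, ?_, ?_⟩
  · rw [fnorm_of_ne_zero hx, zpow_lt_zpow_iff_right₀ one_lt_q]
    omega
  · rw [fnorm_of_ne_zero hx, zpow_le_zpow_iff_right₀ one_lt_q]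
    omega

/-- The real number whose expansion in base `q` consists of the digits of `θ` at the positions
satisfying `p`, which are the positions left free when the other digits are prescribed. -/
def freeDigits (S : Polynomial.Sequence K) (p : ℕ → Prop) (θ : FF K) : ℝ :=
  Real.ofDigits fun i => Fintype.equivFin K (digit S (Nat.nth p i) θ)

variable {p : ℕ → Prop}

lemma Icc_subset_freeDigits_image (S : Polynomial.Sequence K) (hp : {n | p n}.Infinite)
    (v : ℕ → K) :
    Set.Icc 0 1 ⊆ freeDigits S p '' digitSet S {a | ∀ n, ¬p n → a n = v n} := by
  intro y hy
  obtain ⟨s, -, rfl⟩ := Real.ofDigits_SurjOn (Fintype.one_lt_card (α := K)) hy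
  obtain ⟨θ, hθ, hdigit⟩ := exists_digit_eq S fun n =>
    if p n then (Fintype.equivFin K).symm (s (Nat.count p n)) else v n
  refine ⟨θ, ⟨hθ, fun n hn => (hdigit n).trans (if_neg hn)⟩, ?_⟩
  unfold freeDigits
  congr! with i
  rw [hdigit, if_pos (Nat.nth_mem_of_infinite hp i), Nat.count_nth_of_infinite hp,
    Equiv.apply_symm_apply]

variable [DecidablePred p]

lemma abs_freeDigits_sub_le (S : Polynomial.Sequence K) {θ η : FF K} {N : ℕ}
    (h : fnorm (θ - η) < q ^ (-N : ℤ)) :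
    |freeDigits S p θ - freeDigits S p η| ≤ (q ^ Nat.count p N)⁻¹ := by
  have h1 : fnorm (θ - η) < 1 := h.trans_le (zpow_le_one_of_nonpos₀ one_le_q (by omega))
  refine Real.abs_ofDigits_sub_ofDigits_le fun i hi => ?_
  have hdigit := (fnorm_lt_zpow_neg_iff_digit S h1 N).mp h _ (Nat.nth_lt_of_lt_count hi)
  rw [map_sub, sub_eq_zero] at hdigit
  rw [hdigit]

lemma holderOnWith_freeDigits (S : Polynomial.Sequence K) {r C : ℝ≥0}
    (hcount : ∀ N : ℕ, r * N ≤ Nat.count p N + C) (X : Set (ℕ → K)) :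
    HolderOnWith (Fintype.card K ^ (C + r : ℝ)) r (freeDigits S p) (digitSet S X) := by
  intro θ hθ η hη
  rcases eq_or_ne θ η with rfl | hne
  · rw [edist_self]
    exact zero_le
  have hsub : θ - η ≠ 0 := sub_ne_zero.mpr hne
  obtain ⟨N, hlt, hge⟩ := exists_zpow_neg_succ_le_fnorm hsub
    ((fnorm_sub_le θ η).trans_lt (max_lt hθ.1 hη.1))
  rw [edist_eq_ofReal_fnorm, edist_dist, Real.dist_eq, ENNReal.ofReal_rpow_of_pos (fnorm_pos hsub),
    ← ENNReal.ofReal_coe_nnreal, ← ENNReal.ofReal_mul NNReal.zero_le_coe]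
  refine ENNReal.ofReal_le_ofReal ((abs_freeDigits_sub_le S hlt).trans ?_)
  calc (q ^ Nat.count p N)⁻¹ = q ^ (-(Nat.count p N : ℝ)) := by
        rw [Real.rpow_neg q_pos.le, Real.rpow_natCast]
    _ ≤ q ^ ((C + r : ℝ) + ((-(N + 1 : ℕ) : ℤ) : ℝ) * r) := by
        refine Real.rpow_le_rpow_of_exponent_le one_le_q ?_
        push_cast
        linarith [hcount N]
    _ = q ^ (C + r : ℝ) * (q ^ (-(N + 1 : ℕ) : ℤ)) ^ (r : ℝ) := by
        rw [Real.rpow_add q_pos, Real.rpow_mul q_pos.le, Real.rpow_intCast]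
    _ ≤ q ^ (C + r : ℝ) * fnorm (θ - η) ^ (r : ℝ) := by gcongr
    _ = _ := by simp

lemma infinite_setOf_of_mul_le_count {r C : ℝ} (hr : 0 < r)
    (hcount : ∀ N : ℕ, r * N ≤ Nat.count p N + C) : {n | p n}.Infinite := by
  intro hfin
  obtain ⟨N, hN⟩ := exists_nat_gt ((hfin.toFinset.card + C) / r)
  have hle : (Nat.count p N : ℝ) ≤ hfin.toFinset.card := by
    rw [Nat.count_eq_card_filter_range]
    exact_mod_cast Finset.card_le_card fun n hn => by simpa using (Finset.mem_filter.mp hn).2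
  rw [div_lt_iff₀' hr] at hN
  linarith [hcount N]

lemma le_dimH_digitSet (S : Polynomial.Sequence K) {r C : ℝ≥0}
    (hcount : ∀ N : ℕ, r * N ≤ Nat.count p N + C) (v : ℕ → K) :
    r ≤ dimH (digitSet S {a | ∀ n, ¬p n → a n = v n}) := by
  rcases eq_zero_or_pos r with rfl | hr
  · simp
  have hp : {n | p n}.Infinite := infinite_setOf_of_mul_le_count (NNReal.coe_pos.mpr hr) hcount
  have hIcc : dimH (Set.Icc (0 : ℝ) 1) = 1 := by
    simpa using Real.dimH_of_nonempty_interior (s := Set.Icc (0 : ℝ) 1) (by simp)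
  have himage : 1 ≤ dimH (digitSet S {a | ∀ n, ¬p n → a n = v n}) / r :=
    hIcc.symm.trans_le <| (dimH_mono (Icc_subset_freeDigits_image S hp v)).trans <|
      (holderOnWith_freeDigits S hcount _).dimH_image_le hr
  rwa [ENNReal.le_div_iff_mul_le (.inl (by exact_mod_cast hr.ne')) (.inl ENNReal.coe_ne_top),
    one_mul] at himage

theorem one_le_dimH_digitSet (S : Polynomial.Sequence K) {D : ℕ → ℕ}
    (hD : Tendsto (fun k => (D k : ℝ) / k) atTop atTop) (v : ℕ → K) :
    1 ≤ dimH (digitSet S {a | ∀ k, a (D k) = v (D k)}) := by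
  refine ENNReal.le_of_forall_nnreal_lt fun r hr => ?_
  obtain ⟨C, hC⟩ := exists_mul_le_count_notMem_range hD (r := r) (by exact_mod_cast hr)
  have hcount (N : ℕ) : r * N ≤ Nat.count (· ∉ Set.range D) N + (C : ℝ≥0) := by
    exact_mod_cast hC N
  refine (le_dimH_digitSet S hcount v).trans (dimH_mono fun θ hθ => ⟨hθ.1, fun k => hθ.2 (D k) ?_⟩)
  exact not_not_intro (Set.mem_range_self k)

end DimensionLowerBound

section ConvergentDenominators

/-- The sequence `Q` behaves like the denominators of the continued fraction convergents of `α`: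
the degrees increase strictly from `0`, and `Q k * α` is at distance `‖Q (k + 1)‖⁻¹` from some
polynomial. -/
structure ConvergentDenominators (α : FF K) (Q : ℕ → Polynomial K) : Prop where
  zero : Q 0 = 1
  strictMono_natDegree : StrictMono fun k => (Q k).natDegree
  exists_fnorm_sub_eq : ∀ k, ∃ P,
    fnorm (α * polyF (Q k) - polyF P) = q ^ (-(Q (k + 1)).natDegree : ℤ)

namespace ConvergentDenominators

variable {α : FF K} {Q : ℕ → Polynomial K}

lemma ne_zero (hQ : ConvergentDenominators α Q) (k : ℕ) : Q k ≠ 0 := by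
  rcases k.eq_zero_or_pos with rfl | hk
  · rw [hQ.zero]
    exact one_ne_zero
  · exact Polynomial.ne_zero_of_natDegree_gt (hQ.strictMono_natDegree hk)

/-- The index `k` of the block `[deg (Q k), deg (Q (k + 1)))` which contains `n`. -/
def blockIndex (Q : ℕ → Polynomial K) (n : ℕ) : ℕ :=
  Nat.findGreatest (fun k => (Q k).natDegree ≤ n) n

lemma natDegree_blockIndex_le (hQ : ConvergentDenominators α Q) (n : ℕ) :
    (Q (blockIndex Q n)).natDegree ≤ n :=
  Nat.findGreatest_spec (P := fun k => (Q k).natDegree ≤ n) n.zero_le (by simp [hQ.zero])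

lemma lt_natDegree_blockIndex_succ (hQ : ConvergentDenominators α Q) (n : ℕ) :
    n < (Q (blockIndex Q n + 1)).natDegree := by
  by_contra! h
  exact Nat.findGreatest_is_greatest (blockIndex Q n).lt_succ_self
    (hQ.strictMono_natDegree.le_apply.trans h) h

lemma blockIndex_eq (hQ : ConvergentDenominators α Q) {k n : ℕ} (hk : (Q k).natDegree ≤ n)
    (hn : n < (Q (k + 1)).natDegree) : blockIndex Q n = k := by
  have h1 := hQ.strictMono_natDegree.lt_iff_lt.mp
    ((hQ.natDegree_blockIndex_le n).trans_lt hn)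
  have h2 := hQ.strictMono_natDegree.lt_iff_lt.mp
    (hk.trans_lt (hQ.lt_natDegree_blockIndex_succ n))
  omega

/-- The polynomials `zⁿ⁻ᵈ Q k`, where `k` is the index of the block containing `n` and
`d = deg (Q k)`. -/
def sequence (hQ : ConvergentDenominators α Q) : Polynomial.Sequence K where
  elems' n := Polynomial.X ^ (n - (Q (blockIndex Q n)).natDegree) * Q (blockIndex Q n)
  degree_eq' n := by
    rw [Polynomial.degree_mul, Polynomial.degree_X_pow,
      Polynomial.degree_eq_natDegree (hQ.ne_zero _), ← Nat.cast_add,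
      Nat.sub_add_cancel (hQ.natDegree_blockIndex_le n)]

lemma sequence_eq (hQ : ConvergentDenominators α Q) {k n : ℕ} (hk : (Q k).natDegree ≤ n)
    (hn : n < (Q (k + 1)).natDegree) :
    hQ.sequence n = Polynomial.X ^ (n - (Q k).natDegree) * Q k := by
  rw [← hQ.blockIndex_eq hk hn]
  rfl

lemma digit_mul_polyF_eq_zero_iff (hQ : ConvergentDenominators α Q) {k n : ℕ}
    (hk : (Q k).natDegree ≤ n) (hn : n < (Q (k + 1)).natDegree) {x : Polynomial K} (hx : x ≠ 0)
    (hnx : n + x.natDegree < (Q k).natDegree + (Q (k + 1)).natDegree) :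
    digit hQ.sequence n (α * polyF x) = 0 ↔
      n + x.natDegree + 1 ≠ (Q k).natDegree + (Q (k + 1)).natDegree := by
  obtain ⟨P, hP⟩ := hQ.exists_fnorm_sub_eq k
  obtain ⟨m, rfl⟩ := Nat.exists_eq_add_of_le hk
  set y := polyF (Polynomial.X ^ m * x) * (α * polyF (Q k) - polyF P) with hy
  have hdigit : digit hQ.sequence ((Q k).natDegree + m) (α * polyF x) = residue y := by
    have h : polyF (Polynomial.X ^ m * Q k) * (α * polyF x) =
        y + polyF (Polynomial.X ^ m * x * P) := by
      simp only [hy, polyF_mul]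
      ring
    rw [digit_apply, hQ.sequence_eq hk hn, Nat.add_sub_cancel_left, h, map_add, residue_polyF,
      add_zero]
  have hfnorm : fnorm y = q ^ ((m + x.natDegree : ℤ) - (Q (k + 1)).natDegree) := by
    have hXx := mul_ne_zero (pow_ne_zero m Polynomial.X_ne_zero) hx
    rw [hy, fnorm_mul, fnorm_polyF hXx, hP, ← zpow_add₀ q_pos.ne', Polynomial.natDegree_mul'
      (by simpa using hx), Polynomial.natDegree_X_pow, Nat.cast_add, sub_eq_add_neg]
  have hy_lt : fnorm y < 1 := by
    rw [hfnorm, zpow_lt_one_iff_right₀ one_lt_q]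
    omega
  rw [hdigit, residue_eq_zero_iff hy_lt, hfnorm, zpow_lt_zpow_iff_right₀ one_lt_q]
  omega

lemma digit_mul_polyF_eq_zero_of_natDegree_lt (hQ : ConvergentDenominators α Q) {k n : ℕ}
    (hn : (Q k).natDegree ≤ n) {x : Polynomial K} (hx : x.natDegree < (Q k).natDegree) :
    digit hQ.sequence n (α * polyF x) = 0 := by
  rcases eq_or_ne x 0 with rfl | hx0
  · rw [polyF_zero, mul_zero, map_zero]
  have hb := hQ.natDegree_blockIndex_le n
  have hb' := hQ.lt_natDegree_blockIndex_succ n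
  have hkb : (Q k).natDegree ≤ (Q (blockIndex Q n)).natDegree :=
    hQ.strictMono_natDegree.monotone
      (Nat.lt_succ_iff.mp (hQ.strictMono_natDegree.lt_iff_lt.mp (hn.trans_lt hb')))
  exact (hQ.digit_mul_polyF_eq_zero_iff hb hb' hx0 (by omega)).mpr (by omega)

lemma exists_digit_mul_polyF_ne_zero (hQ : ConvergentDenominators α Q) {k : ℕ} {x : Polynomial K}
    (hx : x ≠ 0) (hxk : x.natDegree < (Q k).natDegree) :
    ∃ n < (Q k).natDegree, digit hQ.sequence n (α * polyF x) ≠ 0 := by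
  obtain ⟨j, hb, hb'⟩ : ∃ j, (Q j).natDegree ≤ x.natDegree ∧ x.natDegree < (Q (j + 1)).natDegree :=
    ⟨_, hQ.natDegree_blockIndex_le _, hQ.lt_natDegree_blockIndex_succ _⟩
  have hjk : (Q (j + 1)).natDegree ≤ (Q k).natDegree :=
    hQ.strictMono_natDegree.monotone (hQ.strictMono_natDegree.lt_iff_lt.mp (hb.trans_lt hxk))
  refine ⟨(Q j).natDegree + ((Q (j + 1)).natDegree - 1 - x.natDegree), by omega, ?_⟩
  rw [Ne, hQ.digit_mul_polyF_eq_zero_iff (k := j) (by omega) (by omega) hx (by omega)]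
  omega

lemma exists_digit_mul_polyF_eq (hQ : ConvergentDenominators α Q) (k : ℕ) (a : ℕ → K) :
    ∃ x : Polynomial K, x.degree < (Q k).natDegree ∧
      ∀ n < (Q k).natDegree, digit hQ.sequence n (α * polyF x) = a n := by
  let D := (Q k).natDegree
  let f : Polynomial.degreeLT K D →+ (Fin D → K) :=
    { toFun x n := digit hQ.sequence n (α * polyF x)
      map_zero' := by
        ext n
        simp [polyF_zero]
      map_add' x y := by
        ext n
        simp [polyF_add, mul_add] }
  have hinj : Function.Injective f := by
    rw [injective_iff_map_eq_zero]
    intro x hx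
    by_contra hx0
    have hx0' : (x : Polynomial K) ≠ 0 := by simpa using hx0
    obtain ⟨n, hn, hdigit⟩ := hQ.exists_digit_mul_polyF_ne_zero hx0'
      ((Polynomial.natDegree_lt_iff_degree_lt hx0').mpr (Polynomial.mem_degreeLT.mp x.2))
    exact hdigit (congrFun hx ⟨n, hn⟩)
  let e : Polynomial.degreeLT K D ≃ (Fin D → K) := (Polynomial.degreeLTEquiv K D).toEquiv
  have : Finite (Polynomial.degreeLT K D) := Finite.of_equiv _ e.symm
  have hsurj : Function.Surjective f :=
    (Finite.injective_iff_surjective_of_equiv e).mp hinj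
  obtain ⟨x, hx⟩ := hsurj fun n => a n
  exact ⟨x, Polynomial.mem_degreeLT.mp x.2, fun n hn => congrFun hx ⟨n, hn⟩⟩

end ConvergentDenominators

end ConvergentDenominators

section BadlyApproximable

namespace ConvergentDenominators

variable {α : FF K} {Q : ℕ → Polynomial K}

lemma exists_sdist_lt_of_digit (hQ : ConvergentDenominators α Q) {θ : FF K} {k C : ℕ}
    (hk : digit hQ.sequence (Q k).natDegree θ ≠ 0)
    (hC : ∀ n ∈ Finset.Ico (Q (k + 1)).natDegree ((Q (k + 1)).natDegree + C),
      digit hQ.sequence n θ = 0) :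
    ∃ x : Polynomial K, x ≠ 0 ∧ x.natDegree + 1 = (Q (k + 1)).natDegree ∧
      sdist (α * polyF x - θ) < q ^ (-((Q (k + 1)).natDegree + C : ℕ) : ℤ) := by
  have hlt : (Q k).natDegree < (Q (k + 1)).natDegree := hQ.strictMono_natDegree k.lt_succ_self
  obtain ⟨x, hdeg, hx⟩ := hQ.exists_digit_mul_polyF_eq (k + 1) fun n => digit hQ.sequence n θ
  have hx0 : x ≠ 0 := by
    rintro rfl
    apply hk
    rw [← hx _ hlt, polyF_zero, mul_zero, map_zero]
  have hxk : x.natDegree < (Q (k + 1)).natDegree :=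
    (Polynomial.natDegree_lt_iff_degree_lt hx0).mpr hdeg
  refine ⟨x, hx0, ?_, ?_⟩
  · by_contra hne
    apply hk
    rw [← hx _ hlt, hQ.digit_mul_polyF_eq_zero_iff le_rfl hlt hx0 (by omega)]
    omega
  · refine (sdist_le _ (intPoly (α * polyF x - θ))).trans_lt ?_
    rw [sub_polyF_intPoly, fnorm_lt_zpow_neg_iff_digit hQ.sequence (fnorm_fracPart_lt_one _)]
    intro n hn
    rw [← sub_polyF_intPoly, map_sub, digit_polyF, sub_zero, map_sub, sub_eq_zero]
    rcases lt_or_ge n (Q (k + 1)).natDegree with hnk | hnk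
    · exact hx n hnk
    · rw [hC n (Finset.mem_Ico.mpr ⟨hnk, hn⟩),
        hQ.digit_mul_polyF_eq_zero_of_natDegree_lt hnk hxk]

lemma zpow_neg_two_le_fnorm_mul_sdist (hQ : ConvergentDenominators α Q) {θ : FF K}
    (hθ : ∀ k, digit hQ.sequence (Q k).natDegree θ ≠ 0) {x : Polynomial K} (hx : x ≠ 0) :
    q ^ (-2 : ℤ) ≤ fnorm (polyF x) * sdist (α * polyF x - θ) := by
  obtain ⟨k, hk, hkx⟩ : ∃ k, digit hQ.sequence (Q k).natDegree (α * polyF x) = 0 ∧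
      (Q k).natDegree ≤ x.natDegree + 1 := by
    obtain ⟨j, hb, hb'⟩ :
        ∃ j, (Q j).natDegree ≤ x.natDegree ∧ x.natDegree < (Q (j + 1)).natDegree :=
      ⟨_, hQ.natDegree_blockIndex_le _, hQ.lt_natDegree_blockIndex_succ _⟩
    have hj : (Q j).natDegree < (Q (j + 1)).natDegree := hQ.strictMono_natDegree j.lt_succ_self
    by_cases h : x.natDegree + 1 = (Q (j + 1)).natDegree
    · exact ⟨j + 1, hQ.digit_mul_polyF_eq_zero_of_natDegree_lt le_rfl hb', h.ge⟩
    · refine ⟨j, ?_, by omega⟩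
      rw [hQ.digit_mul_polyF_eq_zero_iff le_rfl hj hx (by omega)]
      omega
  have hsdist : q ^ (-((Q k).natDegree + 1 : ℕ) : ℤ) ≤ sdist (α * polyF x - θ) := by
    refine le_sdist fun P => not_lt.mp fun hlt => hθ k ?_
    have hle : fnorm (α * polyF x - θ - polyF P) < q ^ (-(Q k).natDegree : ℤ) :=
      hlt.trans_le (zpow_le_zpow_right₀ one_le_q (by omega))
    have hdigit := (digit_eq_zero_iff hQ.sequence hle).mpr hlt
    simpa [hk, digit_polyF] using hdigit
  calc q ^ (-2 : ℤ) ≤ q ^ ((x.natDegree : ℤ) + (-((Q k).natDegree + 1 : ℕ) : ℤ)) :=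
        zpow_le_zpow_right₀ one_le_q (by omega)
    _ = fnorm (polyF x) * q ^ (-((Q k).natDegree + 1 : ℕ) : ℤ) := by
        rw [zpow_add₀ q_pos.ne', fnorm_polyF hx]
    _ ≤ fnorm (polyF x) * sdist (α * polyF x - θ) := by
        gcongr
        exact fnorm_nonneg _

end ConvergentDenominators

lemma exists_lt_fnorm_mul_sdist_of_mem_sBad {α θ : FF K} {ε δ : ℝ} (hθ : θ ∈ sBad α ε)
    (hδ : 0 ≤ δ) (hδε : δ < ε) :
    ∃ N : ℕ, ∀ x : Polynomial K, x ≠ 0 → N ≤ x.natDegree →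
      δ < fnorm (polyF x) * sdist (α * polyF x - θ) := by
  have hlt : ENNReal.ofReal δ < sBadLiminf α θ :=
    ((ENNReal.ofReal_lt_ofReal_iff_of_nonneg hδ).mpr hδε).trans_le hθ.2
  have hev := eventually_lt_of_lt_liminf hlt
  rw [eventually_comap, eventually_atTop] at hev
  obtain ⟨b, hb⟩ := hev
  obtain ⟨N, hN⟩ := pow_unbounded_of_one_lt b (one_lt_q (K := K))
  refine ⟨N, fun x hx hNx => (ENNReal.ofReal_lt_ofReal_iff_of_nonneg hδ).mp (hb _ ?_ x rfl)⟩
  rw [fnorm_polyF hx, zpow_natCast]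
  exact hN.le.trans (pow_le_pow_right₀ one_le_q hNx)

namespace ConvergentDenominators

variable {α : FF K} {Q : ℕ → Polynomial K}

lemma sBad_subset_digitSet (hQ : ConvergentDenominators α Q) {ε : ℝ} {C : ℕ}
    (hC : q ^ (-(C + 1 : ℕ) : ℤ) < ε) :
    sBad α ε ⊆ digitSet hQ.sequence {a | ∀ᶠ k in atTop,
      ∃ n ∈ insert (Q k).natDegree
        (Finset.Ico (Q (k + 1)).natDegree ((Q (k + 1)).natDegree + C)),
        a n ≠ (Pi.single (Q k).natDegree 1 : ℕ → K) n} := by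
  intro θ hθ
  obtain ⟨N, hN⟩ := exists_lt_fnorm_mul_sdist_of_mem_sBad hθ (zpow_nonneg q_pos.le _) hC
  refine ⟨hθ.1, ?_⟩
  filter_upwards [eventually_ge_atTop N] with k hk
  by_contra! hall
  have hlt : (Q k).natDegree < (Q (k + 1)).natDegree := hQ.strictMono_natDegree k.lt_succ_self
  obtain ⟨x, hx, hdeg, hsdist⟩ := hQ.exists_sdist_lt_of_digit (θ := θ) (k := k) (C := C)
    (by rw [hall _ (Finset.mem_insert_self _ _), Pi.single_eq_same]; exact one_ne_zero)
    fun n hn => by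
      have hn' : n ≠ (Q k).natDegree := by
        have := Finset.mem_Ico.mp hn
        omega
      rw [hall n (Finset.mem_insert_of_mem hn), Pi.single_eq_of_ne hn']
  have hk_le : k ≤ (Q k).natDegree := hQ.strictMono_natDegree.le_apply
  refine (hN x hx (by omega)).not_ge ?_
  calc fnorm (polyF x) * sdist (α * polyF x - θ)
      ≤ q ^ (x.natDegree : ℤ) * q ^ (-((Q (k + 1)).natDegree + C : ℕ) : ℤ) := by
        rw [fnorm_polyF hx]
        gcongr
    _ = q ^ (-(C + 1 : ℕ) : ℤ) := by
        rw [← zpow_add₀ q_pos.ne', ← hdeg]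
        congr 1
        push_cast
        ring

theorem dimH_sBad_lt_one (hQ : ConvergentDenominators α Q)
    (hgrowth : ¬Tendsto (fun k => ((Q k).natDegree : ℝ) / k) atTop atTop) {ε : ℝ} (hε : 0 < ε) :
    dimH (sBad α ε) < 1 := by
  obtain ⟨C, hC⟩ : ∃ C : ℕ, q ^ (-(C + 1 : ℕ) : ℤ) < ε := by
    obtain ⟨C, hC⟩ := exists_pow_lt_of_lt_one hε (inv_lt_one_of_one_lt₀ (one_lt_q (K := K)))
    refine ⟨C, hC.trans_le' ?_⟩
    rw [← zpow_natCast, inv_zpow']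
    exact zpow_le_zpow_right₀ one_le_q (by omega)
  let E (j : ℕ) : ℕ := (C + 1) * j
  let T (j : ℕ) : Finset ℕ := insert (Q (E j)).natDegree
    (Finset.Ico (Q (E j + 1)).natDegree ((Q (E j + 1)).natDegree + C))
  have hmono := hQ.strictMono_natDegree
  have hE : StrictMono fun j => (Q (E j)).natDegree :=
    hmono.comp (strictMono_mul_left_of_pos C.succ_pos)
  have hT (j : ℕ) : T j ⊆ Finset.Ico (Q (E j)).natDegree (Q (E (j + 1))).natDegree := by
    have hlt : (Q (E j)).natDegree < (Q (E j + 1)).natDegree := hmono (E j).lt_succ_self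
    have hadd : C + (Q (E j + 1)).natDegree ≤ (Q (E (j + 1))).natDegree := by
      refine (hmono.add_le_nat C (E j + 1)).trans_eq ?_
      congr 2
      ring
    exact Finset.insert_subset (Finset.mem_Ico.mpr ⟨le_rfl, hE j.lt_succ_self⟩)
      (Finset.Ico_subset_Ico hlt.le (by omega))
  have hcard (j : ℕ) : (T j).card ≤ C + 1 := (Finset.card_insert_le _ _).trans (by simp)
  refine (dimH_mono fun θ hθ => ?_).trans_lt (dimH_digitSet_lt_one hQ.sequence hE
    (mt (tendsto_div_atTop_of_tendsto_comp_mul hmono.monotone C.succ_pos) hgrowth) hT hcard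
    fun j => Pi.single (Q (E j)).natDegree 1)
  have hθ' := hQ.sBad_subset_digitSet hC hθ
  exact ⟨hθ'.1, (tendsto_id.const_mul_atTop' C.succ_pos).eventually hθ'.2⟩

theorem dimH_sBad_eq_one (hQ : ConvergentDenominators α Q)
    (hgrowth : Tendsto (fun k => ((Q k).natDegree : ℝ) / k) atTop atTop) :
    dimH (sBad α (q ^ (-2 : ℤ))) = 1 := by
  apply le_antisymm
  · refine (dimH_mono fun θ hθ => ?_).trans (dimH_digitSet_le_one hQ.sequence Set.univ)
    exact ⟨hθ.1, Set.mem_univ _⟩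
  · refine (one_le_dimH_digitSet hQ.sequence hgrowth fun _ => 1).trans (dimH_mono ?_)
    intro θ hθ
    refine ⟨hθ.1, le_liminf_of_le (by isBoundedDefault) ?_⟩
    rw [eventually_comap]
    filter_upwards [eventually_gt_atTop 0] with b hb x hx
    refine ENNReal.ofReal_le_ofReal (hQ.zpow_neg_two_le_fnorm_mul_sdist (fun k => ?_) ?_)
    · exact (hθ.2 k).trans_ne one_ne_zero
    · rintro rfl
      exact hb.ne' (by rw [← hx, polyF_zero, fnorm_zero])

end ConvergentDenominators

end BadlyApproximable

section ContinuedFraction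

lemma fnorm_iterate_gaussMap_lt_one {α : FF K} (hα : fnorm α < 1) (k : ℕ) :
    fnorm (gaussMap^[k] α) < 1 :=
  Function.Iterate.rec (fun x => fnorm x < 1) hα (fun x _ => fnorm_fracPart_lt_one x⁻¹) k

lemma one_lt_fnorm_inv_iterate_gaussMap {α : FF K} (hα : fnorm α < 1) (hirr : FIrrational α)
    (k : ℕ) : 1 < fnorm (gaussMap^[k] α)⁻¹ := by
  rw [fnorm_inv]
  exact (one_lt_inv₀ (fnorm_pos (hirr.iterate_gaussMap k).ne_zero)).mpr
    (fnorm_iterate_gaussMap_lt_one hα k)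

lemma fnorm_pquot {α : FF K} (hα : fnorm α < 1) (hirr : FIrrational α) (k : ℕ) :
    fnorm (polyF (pquot α k)) = fnorm (gaussMap^[k] α)⁻¹ := by
  have hpquot : polyF (pquot α k) = (gaussMap^[k] α)⁻¹ - gaussMap^[k + 1] α := by
    rw [iterate_gaussMap_succ, sub_sub_cancel]
  rw [hpquot, fnorm_sub_eq_left]
  exact (fnorm_iterate_gaussMap_lt_one hα _).trans (one_lt_fnorm_inv_iterate_gaussMap hα hirr k)

lemma lt_fnorm_pquot_mul {α : FF K} (hα : fnorm α < 1) (hirr : FIrrational α) (k : ℕ) {c : ℝ}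
    (hc : 0 < c) : c < fnorm (polyF (pquot α k)) * c := by
  refine lt_mul_of_one_lt_left hc ?_
  rw [fnorm_pquot hα hirr]
  exact one_lt_fnorm_inv_iterate_gaussMap hα hirr k

lemma fnorm_cfQ_add_two_of_lt {α : FF K} (hα : fnorm α < 1) (hirr : FIrrational α) {k : ℕ}
    (hk : fnorm (polyF (cfQ α k)) < fnorm (polyF (cfQ α (k + 1)))) :
    fnorm (polyF (cfQ α (k + 2))) =
      fnorm (polyF (pquot α (k + 1))) * fnorm (polyF (cfQ α (k + 1))) := by
  have hcfQ : polyF (cfQ α (k + 2)) =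
      polyF (pquot α (k + 1)) * polyF (cfQ α (k + 1)) - -polyF (cfQ α k) := by
    rw [cfQ, polyF_add, polyF_mul, sub_neg_eq_add]
  rw [hcfQ, fnorm_sub_eq_left, fnorm_mul]
  rw [fnorm_mul, fnorm_neg]
  exact hk.trans (lt_fnorm_pquot_mul hα hirr _ ((fnorm_nonneg _).trans_lt hk))

lemma fnorm_cfQ_lt_succ {α : FF K} (hα : fnorm α < 1) (hirr : FIrrational α) (k : ℕ) :
    fnorm (polyF (cfQ α k)) < fnorm (polyF (cfQ α (k + 1))) := by
  induction k with
  | zero => simpa [cfQ, polyF_one, fnorm_one] using lt_fnorm_pquot_mul hα hirr 0 one_pos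
  | succ k ih =>
    rw [fnorm_cfQ_add_two_of_lt hα hirr ih]
    exact lt_fnorm_pquot_mul hα hirr _ ((fnorm_nonneg _).trans_lt ih)

lemma fnorm_cfQ_succ {α : FF K} (hα : fnorm α < 1) (hirr : FIrrational α) (k : ℕ) :
    fnorm (polyF (cfQ α (k + 1))) = fnorm (polyF (pquot α k)) * fnorm (polyF (cfQ α k)) := by
  cases k with
  | zero => simp [cfQ, polyF_one, fnorm_one]
  | succ k => exact fnorm_cfQ_add_two_of_lt hα hirr (fnorm_cfQ_lt_succ hα hirr k)

lemma cfQ_ne_zero {α : FF K} (hα : fnorm α < 1) (hirr : FIrrational α) (k : ℕ) : cfQ α k ≠ 0 := by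
  cases k with
  | zero => exact one_ne_zero
  | succ k =>
    have hpos := (fnorm_nonneg _).trans_lt (fnorm_cfQ_lt_succ hα hirr k)
    exact mt polyF_eq_zero.mpr (mt fnorm_eq_zero.mpr hpos.ne')

lemma fnorm_convergentError {α : FF K} (hα : fnorm α < 1) (hirr : FIrrational α) (k : ℕ) :
    fnorm (convergentError α k) = (fnorm (polyF (cfQ α (k + 1))))⁻¹ := by
  induction k with
  | zero =>
    rw [fnorm_cfQ_succ hα hirr, fnorm_pquot hα hirr, fnorm_inv]
    simp [cfQ, convergentError, polyF_one, fnorm_one]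
  | succ k ih =>
    rw [fnorm_cfQ_succ hα hirr, fnorm_pquot hα hirr, fnorm_inv, convergentError, fnorm_neg,
      fnorm_mul, ih, mul_inv, inv_inv]

theorem convergentDenominators_cfQ {α : FF K} (hα : fnorm α < 1) (hirr : FIrrational α) :
    ConvergentDenominators α (cfQ α) := by
  have hne := cfQ_ne_zero hα hirr
  refine ⟨rfl, strictMono_nat_of_lt_succ fun k => ?_, fun k => ?_⟩
  · have hlt := fnorm_cfQ_lt_succ hα hirr k
    rw [fnorm_polyF (hne _), fnorm_polyF (hne _), zpow_lt_zpow_iff_right₀ one_lt_q] at hlt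
    exact_mod_cast hlt
  · obtain ⟨P, hP⟩ := exists_mul_polyF_cfQ_eq hirr k
    exact ⟨P, by rw [hP, add_sub_cancel_right, fnorm_convergentError hα hirr,
      fnorm_polyF (hne _), zpow_neg]⟩

end ContinuedFraction

end FPSDA

/-- For an irrational `α ∈ 𝕀` with continued fraction convergent denominators `(Q_k)`:
there exists `ε > 0` such that `Bad^ε(α)` has full Hausdorff dimension if and only if
`‖Q_k‖^{1/k} → ∞`. -/
theorem dimH_sBad_iff_growth {K : Type*} [Field K] [Fintype K]
    (α : FF K) (hα : fnorm α < 1) (hirr : FIrrational α) :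
    (∃ ε : ℝ, 0 < ε ∧ dimH (sBad α ε) = 1) ↔
      Filter.Tendsto (fun k : ℕ => fnorm (polyF (cfQ α k)) ^ (1 / (k : ℝ)))
        Filter.atTop Filter.atTop := by
  have hQ := convergentDenominators_cfQ hα hirr
  simp only [fnorm_polyF (hQ.ne_zero _), tendsto_zpow_rpow_one_div_atTop_iff one_lt_q]
  constructor
  · rintro ⟨ε, hε, hdim⟩
    by_contra hgrowth
    exact (hQ.dimH_sBad_lt_one hgrowth hε).ne hdim
  · intro hgrowth
    exact ⟨_, zpow_pos q_pos _, hQ.dimH_sBad_eq_one hgrowth⟩
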